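/- Suppose α_1 = 1 and 0 ≤ α_t < 1 for all t > 1. Then the AMP iterates satisfy, for every t ≥ 1 and every u ∈ Z: (1/Γ_t) Q(w_{t+1}^{ag}, u) ≤ B_t(u, r_{[t]}) − Σ_{i=1}^t (α_i/(2Γ_i γ_i)) (μ − L_G α_i γ_i − L_H² γ_i²/μ) ‖r_i − w_{i+1}‖². -/

import Mathlib

/-!
Comparing the two prox steps of an iteration (first-order optimality at `w (t+1)` and `r (t+1)`,
then Fenchel–Young to absorb the change of the operator from `r t` to `w (t+1)`) gives the
mirror-prox inequality. Since `wag (t+1) - wmd t = α t • (w (t+1) - r t)`, the smoothness error of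
`G` only costs a factor `(α t) ^ 2`, so that the gap `q t = Q (wag t) u` satisfies
`q (t+1) ≤ (1 - α t) * q t + b t`. Dividing by `Γ t` turns this recursion into a telescoping sum.
-/

section FirstOrder

variable {E : Type*} [NormedAddCommGroup E] [NormedSpace ℝ E] {Z : Set E}

/-- The Bregman divergence `V(z, u)` of `ω`, with `Dω` in the role of the gradient of `ω`. -/
def bregmanDiv (ω : E → ℝ) (Dω : E → E →L[ℝ] ℝ) (z u : E) : ℝ :=
  ω u - ω z - Dω z (u - z)

/-- `x` is a value of the prox-mapping `P_z^J(η)` over `Z` for the divergence `V`. It is a predicate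
since minimizers need neither exist nor be unique for general `V` and `J`. -/
def IsProx (Z : Set E) (V : E → E → ℝ) (J : E → ℝ) (z : E) (η : E →L[ℝ] ℝ) (x : E) : Prop :=
  x ∈ Z ∧ IsMinOn (fun u ↦ η (u - z) + V z u + J u) Z x

theorem bregmanDiv_three_point (ω : E → ℝ) (Dω : E → E →L[ℝ] ℝ) (z x u : E) :
    bregmanDiv ω Dω z u - bregmanDiv ω Dω x u - bregmanDiv ω Dω z x =
      (Dω x - Dω z) (u - x) := by
  simp only [bregmanDiv, map_sub, sub_apply]
  ring

theorem le_apply_sub_add_of_isMinOn_add {f φ : E → ℝ} {f' : E →L[ℝ] ℝ} {x u : E}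
    (hφ : ConvexOn ℝ Z φ) (hx : x ∈ Z) (hu : u ∈ Z) (hf : HasFDerivWithinAt f f' Z x)
    (hmin : IsMinOn (fun y ↦ f y + φ y) Z x) : φ x ≤ f' (u - x) + φ u := by
  set p : ℝ →ᵃ[ℝ] E := AffineMap.lineMap x u with hp
  have hpZ : Set.MapsTo p (Set.Icc 0 1) Z := fun s hs ↦ hφ.1.lineMap_mem hx hu hs
  have hp0 : p 0 = x := AffineMap.lineMap_apply_zero x u
  -- Replacing `φ` by its chord along the segment keeps the minimum and makes `φ` differentiable.
  have hmin_chord : IsMinOn (fun s ↦ f (p s) + s * (φ u - φ x)) (Set.Icc 0 1) 0 := by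
    intro s hs
    have hchord : φ (p s) ≤ (1 - s) * φ x + s * φ u := by
      rw [hp, AffineMap.lineMap_apply_module]
      exact hφ.2 hx hu (sub_nonneg.2 hs.2) hs.1 (sub_add_cancel 1 s)
    have hle : f x + φ x ≤ f (p s) + φ (p s) := hmin (hpZ hs)
    simp only [Set.mem_ofPred_eq, hp0]
    linarith
  have hderiv : HasDerivWithinAt (fun s ↦ f (p s) + s * (φ u - φ x))
      (f' (u - x) + 1 * (φ u - φ x)) (Set.Icc 0 1) 0 := by
    refine HasDerivWithinAt.add ?_ ((hasDerivWithinAt_id 0 _).mul_const _)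
    exact (hp0 ▸ hf : HasFDerivWithinAt f f' Z (p 0)).comp_hasDerivWithinAt 0
      AffineMap.hasDerivWithinAt_lineMap hpZ
  have hcone : (1 : ℝ) ∈ posTangentConeAt (Set.Icc (0 : ℝ) 1) 0 :=
    mem_posTangentConeAt_of_segment_subset (by simp [segment_eq_Icc])
  have hnonneg := hmin_chord.localize.hasFDerivWithinAt_nonneg hderiv.hasFDerivWithinAt hcone
  simp only [ContinuousLinearMap.toSpanSingleton_apply, one_smul, one_mul] at hnonneg
  linarith

theorem apply_le_norm_sq_div_add_norm_sq {μ : ℝ} (hμ : 0 < μ) (f : E →L[ℝ] ℝ) (v : E) :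
    f v ≤ ‖f‖ ^ 2 / (2 * μ) + μ / 2 * ‖v‖ ^ 2 := by
  calc f v ≤ ‖f‖ * ‖v‖ := (le_abs_self _).trans (f.le_opNorm v)
    _ = 2 * ‖v‖ * ‖f‖ / 2 := by ring
    _ ≤ (μ * ‖v‖ ^ 2 + μ⁻¹ * ‖f‖ ^ 2) / 2 := by
      gcongr
      exact two_mul_le_add_mul_sq hμ
    _ = ‖f‖ ^ 2 / (2 * μ) + μ / 2 * ‖v‖ ^ 2 := by ring

variable {ω : E → ℝ} {Dω : E → E →L[ℝ] ℝ} {J : E → ℝ} {μ : ℝ}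

theorem IsProx.three_point_le {z x u : E} {η : E →L[ℝ] ℝ} (hJ : ConvexOn ℝ Z J)
    (hω : HasFDerivWithinAt ω (Dω x) Z x) (hx : IsProx Z (bregmanDiv ω Dω) J z η x)
    (hu : u ∈ Z) :
    η (x - u) + J x - J u ≤
      bregmanDiv ω Dω z u - bregmanDiv ω Dω x u - bregmanDiv ω Dω z x := by
  have hconv : ConvexOn ℝ Z fun y ↦ (η - Dω z) y + J y :=
    ((η - Dω z).toLinearMap.convexOn hJ.1).add hJ
  have hmin : IsMinOn (fun y ↦ ω y + ((η - Dω z) y + J y)) Z x := by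
    intro y hy
    have hle := hx.2 hy
    simp only [Set.mem_ofPred_eq, bregmanDiv, map_sub, sub_apply] at hle ⊢
    linarith
  have hopt := le_apply_sub_add_of_isMinOn_add hconv hx.1 hu hω hmin
  rw [bregmanDiv_three_point]
  simp only [map_sub, sub_apply] at hopt ⊢
  linarith

theorem IsProx.extragradient_le {z w r u : E} {η θ : E →L[ℝ] ℝ} (hμ : 0 < μ)
    (hJ : ConvexOn ℝ Z J) (hω : ∀ x ∈ Z, HasFDerivWithinAt ω (Dω x) Z x)
    (hV : ∀ x ∈ Z, ∀ y ∈ Z, μ / 2 * ‖y - x‖ ^ 2 ≤ bregmanDiv ω Dω x y)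
    (hz : z ∈ Z) (hw : IsProx Z (bregmanDiv ω Dω) J z η w)
    (hr : IsProx Z (bregmanDiv ω Dω) J z θ r) (hu : u ∈ Z) :
    θ (w - u) + J w - J u ≤ bregmanDiv ω Dω z u - bregmanDiv ω Dω r u
      - μ / 2 * ‖w - z‖ ^ 2 + ‖θ - η‖ ^ 2 / (2 * μ) := by
  have hw_opt := hw.three_point_le hJ (hω w hw.1) hr.1
  have hr_opt := hr.three_point_le hJ (hω r hr.1) hu
  have hyoung := apply_le_norm_sq_div_add_norm_sq hμ (θ - η) (w - r)
  rw [norm_sub_rev w r] at hyoung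
  have hzw := hV z hz w hw.1
  have hwr := hV w hw.1 r hr.1
  simp only [map_sub, sub_apply] at hw_opt hr_opt hyoung ⊢
  linarith

theorem IsProx.mirrorProx_le {H : E → E →L[ℝ] ℝ} {D : E →L[ℝ] ℝ} {L γ : ℝ} {z w r u : E}
    (hμ : 0 < μ) (hγ : 0 ≤ γ) (hJ : ConvexOn ℝ Z J)
    (hω : ∀ x ∈ Z, HasFDerivWithinAt ω (Dω x) Z x)
    (hV : ∀ x ∈ Z, ∀ y ∈ Z, μ / 2 * ‖y - x‖ ^ 2 ≤ bregmanDiv ω Dω x y)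
    (hmono : 0 ≤ (H w - H u) (w - u)) (hlip : ‖H w - H z‖ ≤ L * ‖w - z‖)
    (hz : z ∈ Z) (hw : IsProx Z (bregmanDiv ω Dω) (γ • J) z (γ • (H z + D)) w)
    (hr : IsProx Z (bregmanDiv ω Dω) (γ • J) z (γ • (H w + D)) r) (hu : u ∈ Z) :
    γ * ((H u + D) (w - u) + J w - J u) ≤ bregmanDiv ω Dω z u - bregmanDiv ω Dω r u
      - (μ - L ^ 2 * γ ^ 2 / μ) / 2 * ‖w - z‖ ^ 2 := by
  have hextra := hw.extragradient_le hμ (hJ.smul hγ) hω hV hz hr hu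
  have hdiff : γ • (H w + D) - γ • (H z + D) = γ • (H w - H z) := by
    module
  have hnorm : ‖γ • (H w - H z)‖ ^ 2 ≤ (γ * (L * ‖w - z‖)) ^ 2 := by
    rw [norm_smul, Real.norm_of_nonneg hγ]
    gcongr
  have herror : ‖γ • (H w - H z)‖ ^ 2 / (2 * μ) ≤ L ^ 2 * γ ^ 2 / μ / 2 * ‖w - z‖ ^ 2 :=
    calc ‖γ • (H w - H z)‖ ^ 2 / (2 * μ) ≤ (γ * (L * ‖w - z‖)) ^ 2 / (2 * μ) := by gcongr
      _ = L ^ 2 * γ ^ 2 / μ / 2 * ‖w - z‖ ^ 2 := by ring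
  have hmonoγ := mul_nonneg hγ hmono
  rw [hdiff] at hextra
  simp only [smul_apply, add_apply, sub_apply, smul_eq_mul] at hextra hmonoγ ⊢
  linarith

end FirstOrder

section Acceleration

variable {E : Type*} [NormedAddCommGroup E] [NormedSpace ℝ E] {Z : Set E}

theorem accelerated_gradient_step_le {G : E → ℝ} {D : E →L[ℝ] ℝ} {L α : ℝ} {a r w m a' u : E}
    (hα₀ : 0 ≤ α) (hα₁ : α ≤ 1) (hm : m = (1 - α) • a + α • r) (ha' : a' = (1 - α) • a + α • w)
    (hsmooth : G a' ≤ G m + D (a' - m) + L / 2 * ‖a' - m‖ ^ 2)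
    (ha : G m + D (a - m) ≤ G a) (hu : G m + D (u - m) ≤ G u) :
    G a' ≤ (1 - α) * G a + α * (G u + D (w - u)) + L / 2 * α ^ 2 * ‖w - r‖ ^ 2 := by
  have hnorm : ‖a' - m‖ ^ 2 = α ^ 2 * ‖w - r‖ ^ 2 := by
    rw [ha', hm, add_sub_add_left_eq_sub, ← smul_sub, norm_smul, mul_pow, Real.norm_eq_abs, sq_abs]
  have hD : D (a' - m) = (1 - α) * D (a - m) + α * (D (u - m) + D (w - u)) := by
    rw [ha']
    simp only [map_sub, map_add, map_smul, smul_eq_mul]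
    ring
  have ha_weighted := mul_le_mul_of_nonneg_left ha (sub_nonneg.2 hα₁)
  have hu_weighted := mul_le_mul_of_nonneg_left hu hα₀
  rw [hnorm, hD] at hsmooth
  linarith

/-- The gap function `Q(a, u)` of the variational inequality with operator `∇G + H` and simple
term `J`. -/
def viGap (G J : E → ℝ) (H : E → E →L[ℝ] ℝ) (a u : E) : ℝ :=
  G a - G u + H u (a - u) + J a - J u

theorem viGap_accelerated_step_le {G J : E → ℝ} {H : E → E →L[ℝ] ℝ} {D : E →L[ℝ] ℝ} {L α : ℝ}
    {a r w m a' u : E} (hJ : ConvexOn ℝ Z J) (haZ : a ∈ Z) (hwZ : w ∈ Z)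
    (hα₀ : 0 ≤ α) (hα₁ : α ≤ 1) (hm : m = (1 - α) • a + α • r) (ha' : a' = (1 - α) • a + α • w)
    (hsmooth : G a' ≤ G m + D (a' - m) + L / 2 * ‖a' - m‖ ^ 2)
    (ha : G m + D (a - m) ≤ G a) (hu : G m + D (u - m) ≤ G u) :
    viGap G J H a' u ≤ (1 - α) * viGap G J H a u
      + α * ((H u + D) (w - u) + J w - J u) + L / 2 * α ^ 2 * ‖w - r‖ ^ 2 := by
  have hG := accelerated_gradient_step_le hα₀ hα₁ hm ha' hsmooth ha hu
  have hJ' : J a' ≤ (1 - α) * J a + α * J w :=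
    ha' ▸ hJ.2 haZ hwZ (sub_nonneg.2 hα₁) hα₀ (sub_add_cancel 1 α)
  have hH : H u (a' - u) = (1 - α) * H u (a - u) + α * H u (w - u) := by
    rw [ha']
    simp only [map_sub, map_add, map_smul, smul_eq_mul]
    ring
  simp only [viGap, add_apply]
  rw [hH]
  linarith

end Acceleration

section WeightedRecursion

variable {α Γ : ℕ → ℝ}

theorem pos_of_eq_one_sub_mul_pred (hΓ₁ : 0 < Γ 1) (hΓ : ∀ t ≥ 2, Γ t = (1 - α t) * Γ (t - 1))
    (hα : ∀ t ≥ 2, α t < 1) {t : ℕ} (ht : 1 ≤ t) : 0 < Γ t := by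
  induction t, ht using Nat.le_induction with
  | base => exact hΓ₁
  | succ n hn ih =>
    rw [hΓ (n + 1) (by lia)]
    exact mul_pos (sub_pos.2 (hα (n + 1) (by lia))) ih

theorem div_le_sum_div_of_le_one_sub_mul_add {q b : ℕ → ℝ} (hΓ₁ : 0 < Γ 1)
    (hΓ : ∀ t ≥ 2, Γ t = (1 - α t) * Γ (t - 1)) (hα₁ : α 1 = 1) (hα : ∀ t ≥ 2, α t < 1)
    (hq : ∀ t ≥ 1, q (t + 1) ≤ (1 - α t) * q t + b t) {t : ℕ} (ht : 1 ≤ t) :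
    q (t + 1) / Γ t ≤ ∑ i ∈ Finset.Icc 1 t, b i / Γ i := by
  induction t, ht using Nat.le_induction with
  | base =>
    have hq₁ : q 2 ≤ b 1 := by simpa [hα₁] using hq 1 le_rfl
    simpa using div_le_div_of_nonneg_right hq₁ hΓ₁.le
  | succ n hn ih =>
    have hΓn : Γ (n + 1) = (1 - α (n + 1)) * Γ n := hΓ (n + 1) (by lia)
    have hαn : 1 - α (n + 1) ≠ 0 := (sub_pos.2 (hα (n + 1) (by lia))).ne'
    have hpos : 0 < Γ (n + 1) := pos_of_eq_one_sub_mul_pred hΓ₁ hΓ hα (by lia)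
    calc q (n + 1 + 1) / Γ (n + 1)
        ≤ ((1 - α (n + 1)) * q (n + 1) + b (n + 1)) / Γ (n + 1) := by
          gcongr
          exact hq (n + 1) (by lia)
      _ = q (n + 1) / Γ n + b (n + 1) / Γ (n + 1) := by
          rw [add_div, hΓn, mul_div_mul_left _ _ hαn]
      _ ≤ (∑ i ∈ Finset.Icc 1 n, b i / Γ i) + b (n + 1) / Γ (n + 1) := by gcongr
      _ = ∑ i ∈ Finset.Icc 1 (n + 1), b i / Γ i :=
          (Finset.sum_Icc_succ_top (by lia) _).symm

end WeightedRecursion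

section AcceleratedMirrorProx

variable {E : Type*} [NormedAddCommGroup E] [NormedSpace ℝ E]

/-- The accelerated mirror-prox iteration over `Z`, started at `r 1` and indexed from `1`. The
functionals `DG x` play the role of `∇G(x)`, and `V` that of the prox-divergence. -/
structure AcceleratedMirrorProx (Z : Set E) (V : E → E → ℝ) (J : E → ℝ) (DG H : E → E →L[ℝ] ℝ)
    (α γ : ℕ → ℝ) (r w wag wmd : ℕ → E) : Prop where
  start_mem : r 1 ∈ Z
  wag_one : wag 1 = r 1
  wmd_eq : ∀ t ≥ 1, wmd t = (1 - α t) • wag t + α t • r t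
  w_prox : ∀ t ≥ 1, IsProx Z V (γ t • J) (r t) (γ t • (H (r t) + DG (wmd t))) (w (t + 1))
  r_prox : ∀ t ≥ 1, IsProx Z V (γ t • J) (r t) (γ t • (H (w (t + 1)) + DG (wmd t))) (r (t + 1))
  wag_succ : ∀ t ≥ 1, wag (t + 1) = (1 - α t) • wag t + α t • w (t + 1)

namespace AcceleratedMirrorProx

variable {Z : Set E} {V : E → E → ℝ} {J : E → ℝ} {DG H : E → E →L[ℝ] ℝ} {α γ : ℕ → ℝ}
  {r w wag wmd : ℕ → E} {t : ℕ}

theorem r_mem (h : AcceleratedMirrorProx Z V J DG H α γ r w wag wmd)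
    (ht : 1 ≤ t) : r t ∈ Z := by
  cases t, ht using Nat.le_induction with
  | base => exact h.start_mem
  | succ n hn => exact (h.r_prox n hn).1

theorem wag_mem (h : AcceleratedMirrorProx Z V J DG H α γ r w wag wmd)
    (hZ : Convex ℝ Z) (hα : ∀ t ≥ 1, 0 ≤ α t ∧ α t ≤ 1) (ht : 1 ≤ t) : wag t ∈ Z := by
  induction t, ht using Nat.le_induction with
  | base => exact h.wag_one ▸ h.start_mem
  | succ n hn ih =>
    obtain ⟨hα₀, hα₁⟩ := hα n hn
    rw [h.wag_succ n hn]
    exact hZ ih (h.w_prox n hn).1 (sub_nonneg.2 hα₁) hα₀ (sub_add_cancel 1 _)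

theorem wmd_mem (h : AcceleratedMirrorProx Z V J DG H α γ r w wag wmd)
    (hZ : Convex ℝ Z) (hα : ∀ t ≥ 1, 0 ≤ α t ∧ α t ≤ 1) (ht : 1 ≤ t) : wmd t ∈ Z := by
  obtain ⟨hα₀, hα₁⟩ := hα t ht
  rw [h.wmd_eq t ht]
  exact hZ (h.wag_mem hZ hα ht) (h.r_mem ht) (sub_nonneg.2 hα₁) hα₀ (sub_add_cancel 1 _)

theorem viGap_succ_le {ω G : E → ℝ} {Dω : E → E →L[ℝ] ℝ} {μ LG LH : ℝ} {u : E}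
    (h : AcceleratedMirrorProx Z (bregmanDiv ω Dω) J DG H α γ r w wag wmd) (hμ : 0 < μ)
    (hω : ∀ z ∈ Z, HasFDerivWithinAt ω (Dω z) Z z)
    (hV : ∀ z ∈ Z, ∀ u ∈ Z, μ / 2 * ‖u - z‖ ^ 2 ≤ bregmanDiv ω Dω z u) (hJ : ConvexOn ℝ Z J)
    (hGsmooth : ∀ v ∈ Z, ∀ x ∈ Z, G v ≤ G x + DG x (v - x) + LG / 2 * ‖v - x‖ ^ 2)
    (hGcvx : ∀ v ∈ Z, ∀ x ∈ Z, G x + DG x (v - x) ≤ G v)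
    (hHmono : ∀ v ∈ Z, ∀ x ∈ Z, 0 ≤ (H x - H v) (x - v))
    (hHlip : ∀ v ∈ Z, ∀ x ∈ Z, ‖H x - H v‖ ≤ LH * ‖x - v‖)
    (hα : ∀ t ≥ 1, 0 ≤ α t ∧ α t ≤ 1) (hγ : ∀ t ≥ 1, 0 < γ t) (hu : u ∈ Z) (ht : 1 ≤ t) :
    viGap G J H (wag (t + 1)) u ≤ (1 - α t) * viGap G J H (wag t) u
      + (α t / γ t * (bregmanDiv ω Dω (r t) u - bregmanDiv ω Dω (r (t + 1)) u)
        - α t / (2 * γ t) * (μ - LG * α t * γ t - LH ^ 2 * γ t ^ 2 / μ)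
          * ‖r t - w (t + 1)‖ ^ 2) := by
  obtain ⟨hα₀, hα₁⟩ := hα t ht
  have hγt := hγ t ht
  have hr := h.r_mem ht
  have hw := (h.w_prox t ht).1
  have hwag := h.wag_mem hJ.1 hα ht
  have hwag' := h.wag_mem hJ.1 hα (Nat.le_succ_of_le ht)
  have hwmd := h.wmd_mem hJ.1 hα ht
  have hprox := (h.w_prox t ht).mirrorProx_le hμ hγt.le hJ hω hV (hHmono _ hu _ hw)
    (hHlip _ hr _ hw) hr (h.r_prox t ht) hu
  have hprox_weighted :
      α t * ((H u + DG (wmd t)) (w (t + 1) - u) + J (w (t + 1)) - J u) ≤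
        α t / γ t * (bregmanDiv ω Dω (r t) u - bregmanDiv ω Dω (r (t + 1)) u
          - (μ - LH ^ 2 * γ t ^ 2 / μ) / 2 * ‖w (t + 1) - r t‖ ^ 2) := by
    rw [← div_mul_cancel₀ (α t) hγt.ne', mul_assoc, div_mul_cancel₀ _ hγt.ne']
    gcongr
  have hgap := viGap_accelerated_step_le (H := H) hJ hwag hw hα₀ hα₁ (h.wmd_eq t ht)
    (h.wag_succ t ht) (hGsmooth _ hwag' _ hwmd) (hGcvx _ hwag _ hwmd) (hGcvx _ hu _ hwmd)
  have hsmoothing : LG / 2 * α t ^ 2 = α t / γ t * (LG * α t * γ t / 2) := by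
    field_simp
  rw [norm_sub_rev (r t)]
  calc viGap G J H (wag (t + 1)) u
      ≤ (1 - α t) * viGap G J H (wag t) u
        + α t * ((H u + DG (wmd t)) (w (t + 1) - u) + J (w (t + 1)) - J u)
        + LG / 2 * α t ^ 2 * ‖w (t + 1) - r t‖ ^ 2 := hgap
    _ ≤ (1 - α t) * viGap G J H (wag t) u
        + α t / γ t * (bregmanDiv ω Dω (r t) u - bregmanDiv ω Dω (r (t + 1)) u
          - (μ - LH ^ 2 * γ t ^ 2 / μ) / 2 * ‖w (t + 1) - r t‖ ^ 2)
        + α t / γ t * (LG * α t * γ t / 2) * ‖w (t + 1) - r t‖ ^ 2 := by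
      rw [hsmoothing]
      gcongr
    _ = _ := by ring

end AcceleratedMirrorProx

end AcceleratedMirrorProx

theorem amp_master_Q_bound_general {E : Type*} [NormedAddCommGroup E] [NormedSpace ℝ E]
    {Z : Set E} {μ : ℝ} (hμ : 0 < μ) {ω : E → ℝ} {Dω : E → E →L[ℝ] ℝ}
    (hω : ∀ z ∈ Z, HasFDerivWithinAt ω (Dω z) Z z)
    (hV : ∀ z ∈ Z, ∀ u ∈ Z, μ / 2 * ‖u - z‖ ^ 2 ≤ bregmanDiv ω Dω z u)
    {J : E → ℝ} (hJ : ConvexOn ℝ Z J) {G : E → ℝ} {DG : E → E →L[ℝ] ℝ} {LG : ℝ}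
    (hGsmooth : ∀ v ∈ Z, ∀ x ∈ Z, G v ≤ G x + DG x (v - x) + LG / 2 * ‖v - x‖ ^ 2)
    (hGcvx : ∀ v ∈ Z, ∀ x ∈ Z, G x + DG x (v - x) ≤ G v)
    {H : E → E →L[ℝ] ℝ} {LH : ℝ}
    (hHmono : ∀ v ∈ Z, ∀ x ∈ Z, 0 ≤ (H x - H v) (x - v))
    (hHlip : ∀ v ∈ Z, ∀ x ∈ Z, ‖H x - H v‖ ≤ LH * ‖x - v‖)
    {α γ : ℕ → ℝ} (hα : ∀ t ≥ 1, 0 ≤ α t ∧ α t ≤ 1) (hγ : ∀ t ≥ 1, 0 < γ t)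
    {r w wag wmd : ℕ → E}
    (hamp : AcceleratedMirrorProx Z (bregmanDiv ω Dω) J DG H α γ r w wag wmd)
    {Γ : ℕ → ℝ} (hΓ1 : Γ 1 = 1) (hΓrec : ∀ t ≥ 2, Γ t = (1 - α t) * Γ (t - 1))
    (hα1 : α 1 = 1) (hαlt1 : ∀ t ≥ 2, α t < 1) {t : ℕ} (ht : 1 ≤ t) {u : E} (hu : u ∈ Z) :
    1 / Γ t * viGap G J H (wag (t + 1)) u ≤
      (∑ i ∈ Finset.Icc 1 t,
          α i / (Γ i * γ i) * (bregmanDiv ω Dω (r i) u - bregmanDiv ω Dω (r (i + 1)) u))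
        - ∑ i ∈ Finset.Icc 1 t,
            α i / (2 * Γ i * γ i) * (μ - LG * α i * γ i - LH ^ 2 * γ i ^ 2 / μ)
              * ‖r i - w (i + 1)‖ ^ 2 := by
  have hΓ1_pos : 0 < Γ 1 := hΓ1 ▸ one_pos
  have hbound := div_le_sum_div_of_le_one_sub_mul_add (q := fun s ↦ viGap G J H (wag s) u)
    hΓ1_pos hΓrec hα1 hαlt1
    (fun _ hs ↦ hamp.viGap_succ_le hμ hω hV hJ hGsmooth hGcvx hHmono hHlip hα hγ hu hs) ht
  rw [one_div_mul_eq_div, ← Finset.sum_sub_distrib]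
  refine hbound.trans_eq (Finset.sum_congr rfl fun i _ ↦ ?_)
  ring

open Finset in
/-- the master bound on `Q` for the deterministic AMP method. -/
theorem amp_master_Q_bound
    {E : Type*} [NormedAddCommGroup E] [NormedSpace ℝ E] [FiniteDimensional ℝ E]
    (Z : Set E) (hZne : Z.Nonempty) (hZcl : IsClosed Z) (hZcv : Convex ℝ Z)
    (μ : ℝ) (hμ : 0 < μ)
    (ω : E → ℝ) (Dω : E → E →L[ℝ] ℝ)
    (hωdiff : ∀ z ∈ Z, HasFDerivWithinAt ω (Dω z) Z z)
    (hωcont : ContinuousOn Dω Z)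
    (hωsc : StrongConvexOn Z μ ω)
    (V : E → E → ℝ) (hV : ∀ z u, V z u = ω u - ω z - Dω z (u - z))
    (hVlb : ∀ z ∈ Z, ∀ u ∈ Z, μ / 2 * ‖u - z‖ ^ 2 ≤ V z u)
    (J : E → ℝ) (hJ : ConvexOn ℝ Z J)
    (G : E → ℝ) (DG : E → E →L[ℝ] ℝ) (LG : ℝ) (hLG : 0 ≤ LG)
    (hGsmooth : ∀ v ∈ Z, ∀ x ∈ Z, G v ≤ G x + DG x (v - x) + LG / 2 * ‖v - x‖ ^ 2)
    (hGcvx : ∀ v ∈ Z, ∀ x ∈ Z, G x + DG x (v - x) ≤ G v)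
    (H : E → E →L[ℝ] ℝ) (LH : ℝ) (hLH : 0 ≤ LH)
    (hHmono : ∀ v ∈ Z, ∀ x ∈ Z, 0 ≤ (H x - H v) (x - v))
    (hHlip : ∀ v ∈ Z, ∀ x ∈ Z, ‖H x - H v‖ ≤ LH * ‖x - v‖)
    (Q : E → E → ℝ)
    (hQ : ∀ a b, Q a b = G a - G b + (H b) (a - b) + J a - J b)
    (α γ : ℕ → ℝ) (hαrange : ∀ t ≥ 1, 0 ≤ α t ∧ α t ≤ 1) (hγpos : ∀ t ≥ 1, 0 < γ t)
    (r w wag wmd : ℕ → E)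
    (hr1Z : r 1 ∈ Z) (hw1 : w 1 = r 1) (hwag1 : wag 1 = r 1)
    (hwmd : ∀ t ≥ 1, wmd t = (1 - α t) • wag t + α t • r t)
    (hwprox : ∀ t ≥ 1, w (t+1) ∈ Z ∧ IsMinOn
      (fun u => (γ t • (H (r t) + DG (wmd t))) (u - r t) + V (r t) u + γ t * J u) Z (w (t+1)))
    (hrprox : ∀ t ≥ 1, r (t+1) ∈ Z ∧ IsMinOn
      (fun u => (γ t • (H (w (t+1)) + DG (wmd t))) (u - r t) + V (r t) u + γ t * J u) Z (r (t+1)))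
    (hwagrec : ∀ t ≥ 1, wag (t+1) = (1 - α t) • wag t + α t • w (t+1))
    (Γ : ℕ → ℝ) (hΓ1 : Γ 1 = 1) (hΓrec : ∀ t ≥ 2, Γ t = (1 - α t) * Γ (t-1))
    (hα1 : α 1 = 1) (hαlt1 : ∀ t ≥ 2, α t < 1)
    : ∀ t ≥ 1, ∀ u ∈ Z,
      1 / Γ t * Q (wag (t+1)) u ≤
        (∑ i ∈ Finset.Icc 1 t, α i / (Γ i * γ i) * (V (r i) u - V (r (i+1)) u))
          - ∑ i ∈ Finset.Icc 1 t,
              α i / (2 * Γ i * γ i) * (μ - LG * α i * γ i - LH ^ 2 * γ i ^ 2 / μ)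
                * ‖r i - w (i+1)‖ ^ 2 := by
  obtain rfl : V = bregmanDiv ω Dω := funext₂ hV
  obtain rfl : Q = viGap G J H := funext₂ hQ
  exact fun _ ht _ hu ↦ amp_master_Q_bound_general hμ hωdiff hVlb hJ hGsmooth hGcvx hHmono hHlip
    hαrange hγpos ⟨hr1Z, hwag1, hwmd, hwprox, hrprox, hwagrec⟩ hΓ1 hΓrec hα1 hαlt1 ht hu
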